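/- Let S and A be nonempty finite types, P : S → A → PMF S a transition kernel, ρ0 a probability distribution on S, γ ∈ [0,1) a discount factor, and T ∈ ℕ a horizon. Let π_θ : ℝᵈ → S → A → ℝ be a parameterized policy such that for every θ ∈ ℝᵈ and s ∈ S the map a ↦ π_θ(a|s) is a strictly positive probability mass function on A, and for every s ∈ S, a ∈ A the map θ ↦ π_θ(a|s) is differentiable. Let R_i : S × A → ℝ be any (intrinsic) reward function, and define the finite-horizon objective D(θ) = Σ_{τ} p_θ(τ) Σ_{t=0}^{T} γ^t R_i(s_t, a_t), where the sum ranges over trajectories τ = (s_0, a_0, …, s_T, a_T) with probability p_θ(τ) = ρ0(s_0) · Π_{t=0}^{T} π_θ(a_t|s_t) · Π_{t=0}^{T-1} P(s_{t+1}|s_t, a_t). Then the gradient of D satisfies ∇_θ D(θ) = Σ_{τ} p_θ(τ) Σ_{t=0}^{T} γ^t (∇_θ log π_θ(a_t|s_t)) · Q_t(s_t, a_t), where Q_t(s, a) = E[Σ_{l=0}^{T-t} γ^l R_i(s_{t+l}, a_{t+l}) | s_t = s, a_t = a] is the expected discounted reward-to-go under π_θ from time t. -/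

import Mathlib

open scoped BigOperators

/-- Trajectory weight. -/
noncomputable def trajW {S A : Type*} (p : S → A → ℝ) (P : S → A → S → ℝ) (μ : S → ℝ) (T : ℕ)
    (τ : Fin (T + 1) → S × A) : ℝ :=
  μ (τ 0).1 * (∏ t : Fin (T + 1), p (τ t).1 (τ t).2) *
    ∏ t : Fin T, P (τ t.castSucc).1 (τ t.castSucc).2 (τ t.succ).1

/-- Reward to go. -/
noncomputable def Qr {S A : Type*} [Fintype S] [Fintype A] (p : S → A → ℝ) (P : S → A → S → ℝ)
    (γ : ℝ) (R : S → A → ℝ) (k : ℕ) : S → A → ℝ :=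
  Nat.rec (motive := fun _ => S → A → ℝ) R
        (fun _ ih s a => R s a + γ * ∑ s' : S, P s a s' *
          ∑ a' : A, p s' a' * ih s' a') k

theorem Qr_succ {S A : Type*} [Fintype S] [Fintype A] (p : S → A → ℝ) (P : S → A → S → ℝ)
    (γ : ℝ) (R : S → A → ℝ) (k : ℕ) (s : S) (a : A) :
    Qr p P γ R (k+1) s a = R s a + γ * ∑ s' : S, P s a s' *
          ∑ a' : A, p s' a' * Qr p P γ R k s' a' := rfl

theorem trajW_zero {S A : Type*} [Fintype S] [Fintype A] {E : Type*} [AddCommGroup E] [Module ℝ E]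
    (p : S → A → ℝ) (P : S → A → S → ℝ) (μ : S → ℝ) (F : (Fin 1 → S × A) → E) :
    ∑ τ : Fin (0 + 1) → S × A, trajW p P μ 0 τ • F τ
      = ∑ s, ∑ a, (μ s * p s a) • F (fun _ => (s, a)) := by
  rw [← Fintype.sum_prod_type' (f := fun s a => (μ s * p s a) • F (fun _ => (s, a)))]
  refine Fintype.sum_equiv (Equiv.funUnique (Fin 1) (S × A)) _ _ ?_
  intro τ
  have : (fun _ => ((τ 0).1, (τ 0).2)) = τ := by
    funext i; rw [Subsingleton.elim i 0]
  simp [trajW, this]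

theorem trajW_succ {S A : Type*} [Fintype S] [Fintype A] {E : Type*} [AddCommGroup E] [Module ℝ E]
    (p : S → A → ℝ) (P : S → A → S → ℝ) (μ : S → ℝ) (T : ℕ) (F : (Fin (T + 1 + 1) → S × A) → E) :
    ∑ τ : Fin (T + 1 + 1) → S × A, trajW p P μ (T + 1) τ • F τ
      = ∑ s, ∑ a, (μ s * p s a) • ∑ τ : Fin (T + 1) → S × A, trajW p P (P s a) T τ •
          F (Fin.cons (s, a) τ) := by
  rw [← (Fin.consEquiv (fun _ => S × A)).sum_comp, Fintype.sum_prod_type, Fintype.sum_prod_type]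
  refine Finset.sum_congr rfl fun s _ => Finset.sum_congr rfl fun a _ => ?_
  rw [Finset.smul_sum]
  refine Finset.sum_congr rfl fun τ _ => ?_
  rw [smul_smul]
  congr 1
  simp only [trajW, Fin.consEquiv, Equiv.coe_fn_mk]
  rw [Fin.prod_univ_succ, Fin.prod_univ_succ (n := T) (f := fun t => P
    (Fin.cons (α := fun _ => S × A) (s, a) τ t.castSucc).1
    (Fin.cons (α := fun _ => S × A) (s, a) τ t.castSucc).2
    (Fin.cons (α := fun _ => S × A) (s, a) τ t.succ).1)]
  simp only [Fin.cons_zero, Fin.cons_succ, Fin.castSucc_zero, ← Fin.succ_castSucc]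
  ring

theorem trajW_mass {S A : Type*} [Fintype S] [Fintype A]
    (p : S → A → ℝ) (P : S → A → S → ℝ) (hp : ∀ s, ∑ a, p s a = 1)
    (hP : ∀ s a, ∑ s', P s a s' = 1) (T : ℕ) : ∀ μ : S → ℝ,
    ∑ τ : Fin (T + 1) → S × A, trajW p P μ T τ = ∑ s, μ s := by
  induction T with
  | zero =>
    intro μ
    have := trajW_zero p P μ (fun _ => (1 : ℝ))
    simp only [smul_eq_mul, mul_one] at this
    rw [this]
    simp only [← Finset.mul_sum, hp, mul_one]
  | succ T ih =>
    intro μ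
    have := trajW_succ p P μ T (fun _ => (1 : ℝ))
    simp only [smul_eq_mul, mul_one] at this
    rw [this]
    simp only [ih, hP, mul_one, ← Finset.mul_sum, hp]

theorem trajW_obj_succ {S A : Type*} [Fintype S] [Fintype A]
    (p : S → A → ℝ) (P : S → A → S → ℝ) (hp : ∀ s, ∑ a, p s a = 1)
    (hP : ∀ s a, ∑ s', P s a s' = 1) (γ : ℝ) (R : S → A → ℝ) (T : ℕ) (μ : S → ℝ) :
    ∑ τ : Fin (T + 1 + 1) → S × A, trajW p P μ (T + 1) τ *
        ∑ t : Fin (T + 1 + 1), γ ^ (t : ℕ) * R (τ t).1 (τ t).2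
     = ∑ s, ∑ a, (μ s * p s a) * (R s a + γ * ∑ τ : Fin (T + 1) → S × A, trajW p P (P s a) T τ *
        ∑ t : Fin (T + 1), γ ^ (t : ℕ) * R (τ t).1 (τ t).2) := by
  have := trajW_succ p P μ T
    (fun τ => ∑ t : Fin (T + 1 + 1), γ ^ (t : ℕ) * R (τ t).1 (τ t).2)
  simp only [smul_eq_mul] at this
  rw [this]
  refine Finset.sum_congr rfl fun s _ => Finset.sum_congr rfl fun a _ => ?_
  congr 1
  simp only [Fin.sum_univ_succ (n := T + 1), Fin.cons_zero, Fin.cons_succ, Fin.val_zero, pow_zero,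
    one_mul, Fin.val_succ, mul_add, Finset.sum_add_distrib, ← Finset.sum_mul,
    trajW_mass p P hp hP, hP]
  congr 1
  rw [Finset.mul_sum]
  refine Finset.sum_congr rfl fun τ _ => ?_
  rw [mul_left_comm, Finset.mul_sum (a := γ)]
  congr 1
  refine Finset.sum_congr rfl fun t _ => ?_
  ring

theorem trajW_obj {S A : Type*} [Fintype S] [Fintype A]
    (p : S → A → ℝ) (P : S → A → S → ℝ) (hp : ∀ s, ∑ a, p s a = 1)
    (hP : ∀ s a, ∑ s', P s a s' = 1) (γ : ℝ) (R : S → A → ℝ) (T : ℕ) : ∀ (μ : S → ℝ),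
    ∑ τ : Fin (T + 1) → S × A, trajW p P μ T τ *
        ∑ t : Fin (T + 1), γ ^ (t : ℕ) * R (τ t).1 (τ t).2
     = ∑ s, μ s * ∑ a, p s a * Qr p P γ R T s a := by
  induction T with
  | zero =>
    intro μ
    have := trajW_zero p P μ
      (fun τ => ∑ t : Fin (0 + 1), γ ^ (t : ℕ) * R (τ t).1 (τ t).2)
    simp only [smul_eq_mul] at this
    rw [this]
    simp [Qr, Finset.mul_sum, mul_assoc]
  | succ T ih =>
    intro μ
    rw [trajW_obj_succ p P hp hP]
    simp only [ih, Qr_succ]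
    simp only [Finset.mul_sum, mul_assoc]

theorem trajW_grad {S A : Type*} [Fintype S] [Fintype A] {E : Type*} [NormedAddCommGroup E]
    [NormedSpace ℝ E] (π : E → S → A → ℝ) (P : S → A → S → ℝ)
    (hpos : ∀ θ s a, 0 < π θ s a) (hp : ∀ θ s, ∑ a, π θ s a = 1)
    (hd : ∀ s a, Differentiable ℝ fun θ => π θ s a)
    (hP : ∀ s a, ∑ s', P s a s' = 1) (γ : ℝ) (R : S → A → ℝ) (θ : E) (T : ℕ) : ∀ (μ : S → ℝ),
    HasFDerivAt (fun θ' => ∑ τ : Fin (T + 1) → S × A, trajW (π θ') P μ T τ *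
        ∑ t : Fin (T + 1), γ ^ (t : ℕ) * R (τ t).1 (τ t).2)
     (∑ τ : Fin (T + 1) → S × A, trajW (π θ) P μ T τ •
        ∑ t : Fin (T + 1),
          (γ ^ (t : ℕ) * Qr (π θ) P γ R (T - (t : ℕ)) (τ t).1 (τ t).2) •
            fderiv ℝ (fun θ' => Real.log (π θ' (τ t).1 (τ t).2)) θ) θ := by
  have hlog : ∀ s a, HasFDerivAt (fun θ' => π θ' s a)
      (π θ s a • fderiv ℝ (fun θ' => Real.log (π θ' s a)) θ) θ := by
    intro s a
    have h := (hd s a θ).hasFDerivAt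
    rw [(h.log (hpos θ s a).ne').fderiv, smul_smul, mul_inv_cancel₀ (hpos θ s a).ne', one_smul]
    exact h
  induction T with
  | zero =>
    intro μ
    rw [trajW_zero]
    have h0 : ∀ θ', _ := fun θ' => trajW_zero (π θ') P μ
      (fun τ => ∑ t : Fin (0 + 1), γ ^ (t : ℕ) * R (τ t).1 (τ t).2)
    simp only [smul_eq_mul] at h0
    simp only [h0]
    refine HasFDerivAt.fun_sum fun s _ => HasFDerivAt.fun_sum fun a _ => ?_
    simp only [Nat.zero_add, Fin.sum_univ_succ, Fin.sum_univ_zero, Fin.val_zero, pow_zero, one_mul,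
      add_zero, Nat.sub_zero]
    refine (((hlog s a).const_mul (μ s)).mul_const (R s a)).congr_fderiv ?_
    simp only [smul_smul]
    congr 1
    change R s a * _ = _ * R s a
    ring
  | succ T ih =>
    intro μ
    rw [trajW_succ]
    simp only [trajW_obj_succ _ P (hp _) hP]
    refine HasFDerivAt.fun_sum fun s _ => HasFDerivAt.fun_sum fun a _ => ?_
    refine (((hlog s a).const_mul (μ s)).mul (((ih (P s a)).const_mul γ).const_add (R s a))).congr_fderiv ?_
    symm
    rw [trajW_obj (π θ) P (hp θ) hP, ← Qr_succ]
    simp only [Fin.sum_univ_succ (n := T + 1), Fin.cons_zero, Fin.cons_succ, Fin.val_zero, pow_zero,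
      one_mul, Fin.val_succ, smul_add, Finset.sum_add_distrib, ← Finset.sum_smul,
      trajW_mass _ P (hp _) hP, hP, one_smul, Nat.sub_zero, Nat.add_sub_add_right]
    rw [add_comm]
    congr 1
    · congr 1
      rw [Finset.smul_sum]
      refine Finset.sum_congr rfl fun τ _ => ?_
      rw [smul_comm γ, Finset.smul_sum (r := γ)]
      congr 1
      refine Finset.sum_congr rfl fun t _ => ?_
      rw [smul_smul]
      congr 1
      ring
    · simp only [smul_smul]
      congr 1
      ring

/-- Lemma 1 (gradient derivation of the MMD term): in a finite MDP with horizon `T`,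
for a differentiable, strictly positive parameterized policy `π_θ`, the gradient of
the finite-horizon objective
`D(θ) = Σ_τ p_θ(τ) Σ_{t=0}^T γ^t R_i(s_t, a_t)` is
`∇_θ D(θ) = Σ_τ p_θ(τ) Σ_{t=0}^T γ^t (∇_θ log π_θ(a_t|s_t)) Q_t(s_t,a_t)`,
where `Q_t(s,a)` is the expected discounted reward-to-go from time `t`,
characterized recursively by
`Q_T(s,a) = R_i(s,a)` and
`Q_t(s,a) = R_i(s,a) + γ Σ_{s'} P(s'|s,a) Σ_{a'} π_θ(a'|s') Q_{t+1}(s',a')`. -/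
theorem tace_policy_gradient_mmd_term
    {S A : Type*} [Fintype S] [Fintype A] [Nonempty S] [Nonempty A]
    [DecidableEq S] [DecidableEq A]
    (d : ℕ) (P : S → A → PMF S) (ρ0 : PMF S)
    (γ : ℝ) (hγ0 : 0 ≤ γ) (hγ1 : γ < 1) (T : ℕ)
    (π : (Fin d → ℝ) → S → A → ℝ)
    (hπpos : ∀ θ s a, 0 < π θ s a)
    (hπsum : ∀ θ s, ∑ a : A, π θ s a = 1)
    (hπdiff : ∀ s a, Differentiable ℝ fun θ : Fin d → ℝ => π θ s a)
    (Ri : S → A → ℝ) (θ : Fin d → ℝ) :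
    -- probability of a trajectory `τ = (s_0,a_0,…,s_T,a_T)` under `π_{θ'}`
    let ptraj : (Fin d → ℝ) → (Fin (T + 1) → S × A) → ℝ := fun θ' τ =>
      (ρ0 (τ 0).1).toReal * (∏ t : Fin (T + 1), π θ' (τ t).1 (τ t).2) *
        ∏ t : Fin T, (P (τ t.castSucc).1 (τ t.castSucc).2 (τ t.succ).1).toReal
    -- expected discounted reward-to-go with `k` remaining steps under `π_θ`:
    -- `Qrem k s a = E[Σ_{l=0}^{k} γ^l R_i(s_{t+l},a_{t+l}) | s_t = s, a_t = a]`
    let Qrem : ℕ → S → A → ℝ := fun k =>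
      Nat.rec (motive := fun _ => S → A → ℝ) Ri
        (fun _ ih s a => Ri s a + γ * ∑ s' : S, (P s a s').toReal *
          ∑ a' : A, π θ s' a' * ih s' a') k
    -- the finite-horizon objective `D(θ') = Σ_τ p_{θ'}(τ) Σ_{t=0}^T γ^t R_i(s_t,a_t)`
    let D : (Fin d → ℝ) → ℝ := fun θ' =>
      ∑ τ : Fin (T + 1) → S × A, ptraj θ' τ *
        ∑ t : Fin (T + 1), γ ^ (t : ℕ) * Ri (τ t).1 (τ t).2
    fderiv ℝ D θ =
      ∑ τ : Fin (T + 1) → S × A, ptraj θ τ •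
        ∑ t : Fin (T + 1),
          (γ ^ (t : ℕ) * Qrem (T - (t : ℕ)) (τ t).1 (τ t).2) •
            fderiv ℝ (fun θ' => Real.log (π θ' (τ t).1 (τ t).2)) θ := by
  intro ptraj Qrem D
  have hP : ∀ s a, ∑ s', (P s a s').toReal = 1 := by
    intro s a
    rw [← ENNReal.toReal_sum (fun s' _ => (P s a).apply_ne_top s'), ← tsum_fintype (L := .unconditional S),
      (P s a).tsum_coe, ENNReal.toReal_one]
  exact (trajW_grad π (fun s a s' => (P s a s').toReal) hπpos hπsum hπdiff hP γ Ri θ T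
    (fun s => (ρ0 s).toReal)).fderiv
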